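/- Let a = 1/√3 and let Φ be the 4×2 real matrix with rows (a, a), (a, −a), (a, 0), (0, a) (i.e., Φᵀ = [[a,a,a,0],[a,−a,0,a]]). Then Φᵀ Φ = I₂, and for every 2-element subset S of {1,2,3,4} and every nonzero u ∈ ℤ², ‖Φ_S u‖² ≥ 1/3, where Φ_S is the 2×2 matrix of rows of Φ indexed by S. Moreover there exist a 2-subset S and a nonzero u ∈ ℤ² with ‖Φ_S u‖² = 1/3. -/

import Mathlib

open Matrix

/-- The `k × k` submatrix of `Φ` formed by the rows indexed by the `k`-element subset `S`. -/
def rowsSub {n k : ℕ} (Φ : Matrix (Fin n) (Fin k) ℝ)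
    (S : {s : Finset (Fin n) // s.card = k}) : Matrix (Fin k) (Fin k) ℝ :=
  fun i j => Φ ((S.1.orderIsoOfFin S.2 i : Fin n)) j

/-- Squared Euclidean norm of a vector in `ℝ^k`. -/
def sqnorm {k : ℕ} (x : Fin k → ℝ) : ℝ := ∑ i, x i ^ 2

/-!
Up to the factor `1/√3`, `Φ` is an integer matrix, all of whose `2 × 2` minors are nonzero. Hence
any two of its rows send a nonzero integer vector to a nonzero integer vector, whose squared norm
is a positive integer; the scaling turns the bound `1 ≤ ‖·‖²` into `1/3 ≤ ‖·‖²`.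
The last two rows form `1/√3` times the identity, so the bound is attained there.
-/

theorem transpose_smul_map_intCast_mul_self {R ι κ : Type*} [CommRing R] [Fintype ι]
    [DecidableEq κ] (c : R) {M : Matrix ι κ ℤ} {d : ℤ} (hM : Mᵀ * M = d • 1) :
    (c • M.map (Int.cast : ℤ → R))ᵀ * (c • M.map (Int.cast : ℤ → R)) = (c ^ 2 * d) • 1 := by
  have gram_map : (M.map (Int.cast : ℤ → R))ᵀ * M.map (Int.cast : ℤ → R) = (d : R) • 1 :=
    calc
      _ = (Mᵀ * M).map (Int.cast : ℤ → R) := (Matrix.map_mul (f := Int.castRingHom R)).symm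
      _ = (d : R) • 1 := by
        ext i j
        simp only [hM, map_apply, Matrix.smul_apply, one_apply, smul_eq_mul, mul_ite, mul_one,
          mul_zero, Int.cast_ite, Int.cast_zero]
  rw [transpose_smul, Matrix.smul_mul, Matrix.mul_smul, gram_map, smul_smul, smul_smul, sq]

theorem sqnorm_rowsSub_mulVec {n k : ℕ} (Φ : Matrix (Fin n) (Fin k) ℝ)
    (S : {s : Finset (Fin n) // s.card = k}) (v : Fin k → ℝ) :
    sqnorm (rowsSub Φ S *ᵥ v) = ∑ i ∈ S.1, (Φ *ᵥ v) i ^ 2 := by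
  rw [← Finset.sum_coe_sort S.1]
  exact Equiv.sum_comp (S.1.orderIsoOfFin S.2).toEquiv fun i : S.1 => (Φ *ᵥ v) i ^ 2

theorem sqnorm_rowsSub_smul_map_intCast_mulVec {n k : ℕ} (c : ℝ) (M : Matrix (Fin n) (Fin k) ℤ)
    (S : {s : Finset (Fin n) // s.card = k}) (u : Fin k → ℤ) :
    sqnorm (rowsSub (c • M.map (Int.cast : ℤ → ℝ)) S *ᵥ fun j => (u j : ℝ)) =
      c ^ 2 * (∑ i ∈ S.1, (M *ᵥ u) i ^ 2 : ℤ) := by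
  have map_mulVec_cast (i : Fin n) :
      (M.map (Int.cast : ℤ → ℝ) *ᵥ fun j => (u j : ℝ)) i = ((M *ᵥ u) i : ℝ) :=
    ((Int.castRingHom ℝ).map_mulVec M u i).symm
  simp only [sqnorm_rowsSub_mulVec, smul_mulVec, Pi.smul_apply, smul_eq_mul, map_mulVec_cast,
    mul_pow, ← Finset.mul_sum, Int.cast_sum, Int.cast_pow]

theorem one_le_sum_sq_mulVec_of_det_submatrix_ne_zero {ι κ : Type*} [Fintype κ] [DecidableEq κ]
    {M : Matrix ι κ ℤ} {s : Finset ι} {e : κ → ι} (he : ∀ j, e j ∈ s)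
    (hdet : (M.submatrix e id).det ≠ 0) {u : κ → ℤ} (hu : u ≠ 0) :
    1 ≤ ∑ i ∈ s, (M *ᵥ u) i ^ 2 := by
  obtain ⟨j, hj⟩ : ∃ j, (M *ᵥ u) (e j) ≠ 0 :=
    Function.ne_iff.mp (mt (eq_zero_of_mulVec_eq_zero hdet) hu)
  calc
    1 ≤ (M *ᵥ u) (e j) ^ 2 := Int.add_one_le_of_lt (sq_pos_of_ne_zero hj)
    _ ≤ ∑ i ∈ s, (M *ᵥ u) i ^ 2 :=
      Finset.single_le_sum (f := fun i => (M *ᵥ u) i ^ 2) (fun _ _ => sq_nonneg _) (he j)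

theorem sq_le_sqnorm_rowsSub_smul_map_intCast_mulVec {n k : ℕ} (c : ℝ)
    {M : Matrix (Fin n) (Fin k) ℤ} (S : {s : Finset (Fin n) // s.card = k})
    (hdet : (M.submatrix (S.1.orderEmbOfFin S.2) id).det ≠ 0) {u : Fin k → ℤ} (hu : u ≠ 0) :
    c ^ 2 ≤ sqnorm (rowsSub (c • M.map (Int.cast : ℤ → ℝ)) S *ᵥ fun j => (u j : ℝ)) := by
  rw [sqnorm_rowsSub_smul_map_intCast_mulVec]
  refine le_mul_of_one_le_right (sq_nonneg c) ?_
  exact_mod_cast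
    one_le_sum_sq_mulVec_of_det_submatrix_ne_zero (S.1.orderEmbOfFin_mem S.2) hdet hu

/-- The integer matrix `√3 Φ` of the `(4,2)` construction. -/
def fourTwoMatrix : Matrix (Fin 4) (Fin 2) ℤ :=
  !![1, 1; 1, -1; 1, 0; 0, 1]

theorem smul_map_intCast_fourTwoMatrix {R : Type*} [Ring R] (c : R) :
    c • fourTwoMatrix.map (Int.cast : ℤ → R) = !![c, c; c, -c; c, 0; 0, c] := by
  ext i j
  fin_cases i <;> fin_cases j <;> simp [fourTwoMatrix]

theorem transpose_fourTwoMatrix_mul_self : fourTwoMatrixᵀ * fourTwoMatrix = (3 : ℤ) • 1 := by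
  decide

theorem det_submatrix_fourTwoMatrix_ne_zero {e : Fin 2 → Fin 4} (he : Function.Injective e) :
    (fourTwoMatrix.submatrix e id).det ≠ 0 := by
  have minor_ne_zero : ∀ i j : Fin 4, i ≠ j →
      fourTwoMatrix i 0 * fourTwoMatrix j 1 - fourTwoMatrix i 1 * fourTwoMatrix j 0 ≠ 0 := by
    decide
  rw [det_fin_two]
  exact minor_ne_zero (e 0) (e 1) (he.ne Fin.zero_ne_one)

/-- The paper's `(4,2)` construction with `a = 1/√3`: `Φ` has orthonormal columns,
every child lattice `Φ_S ℤ²` has squared shortest nonzero vector at least `1/3`,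
and the value `1/3` is attained. -/
theorem four_two_construction :
    letI a : ℝ := 1 / Real.sqrt 3
    letI Φ : Matrix (Fin 4) (Fin 2) ℝ := !![a, a; a, -a; a, 0; 0, a]
    Φᵀ * Φ = 1 ∧
    (∀ S : {s : Finset (Fin 4) // s.card = 2}, ∀ u : Fin 2 → ℤ, u ≠ 0 →
      1 / 3 ≤ sqnorm ((rowsSub Φ S).mulVec fun j => (u j : ℝ))) ∧
    (∃ S : {s : Finset (Fin 4) // s.card = 2}, ∃ u : Fin 2 → ℤ, u ≠ 0 ∧
      sqnorm ((rowsSub Φ S).mulVec fun j => (u j : ℝ)) = 1 / 3) := by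
  have sq_scale : (1 / √3 : ℝ) ^ 2 = 1 / 3 := by
    rw [div_pow, one_pow, Real.sq_sqrt zero_le_three]
  simp only [← smul_map_intCast_fourTwoMatrix]
  refine ⟨?_, fun S u hu => ?_, ⟨{2, 3}, by decide⟩, ![1, 0], by decide, ?_⟩
  · rw [transpose_smul_map_intCast_mul_self _ transpose_fourTwoMatrix_mul_self, sq_scale]
    norm_num
  · rw [← sq_scale]
    exact sq_le_sqnorm_rowsSub_smul_map_intCast_mulVec _ S
      (det_submatrix_fourTwoMatrix_ne_zero (S.1.orderEmbOfFin S.2).injective) hu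
  · have sum_sq : ∑ i ∈ {2, 3}, (fourTwoMatrix *ᵥ ![1, 0]) i ^ 2 = 1 := by decide
    rw [sqnorm_rowsSub_smul_map_intCast_mulVec, sum_sq, sq_scale, Int.cast_one, mul_one]
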